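/- arXiv:2105.10451 — 2 statements merged into one kernel-verified Lean document; each statement's English description precedes it below -/
import Mathlib

section
/- Let f_0,…,f_d ∈ L with d ≥ 1 and f_d ≠ 0, and let A ⊆ L \ {0} be a finite set such that N_{L/K} is injective on A. Then Σ_{α ∈ A} dim_K(ker F_α) = d if and only if the L-linear endomorphism of L^d given by the matrix A_F is diagonalizable with all its eigenvalues contained in {N_{L/K}(α) : α ∈ A}; equivalently, if and only if the subspaces ker(A_F − N_{L/K}(α)·I_d) for α ∈ A span L^d. In that case, for each α ∈ A the eigenspace of A_F for the eigenvalue N_{L/K}(α) has L-dimension equal to dim_K(ker F_α). -/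
/-!
For `α ≠ 0` put `T v = θ⁻¹(α⁻¹ · v C_F)` on row vectors `v ∈ L^d`. This map is additive and
`θ⁻¹`-semilinear. Since `θ^k (T^k v) = N_k(α)⁻¹ · v · C_F θ(C_F) ⋯ θ^{k-1}(C_F)` and `θ^n = 1`,
the vectors fixed by `T^n` form the left eigenspace of `A_F` for the eigenvalue `N_{L/K}(α)`
(`iterate_twist`). The vectors fixed by `T` itself are the solutions of `v C_F = α θ(v)`, that is,
the vectors `(N_i(α) θ^i(β))_{i<d}` with `F_α(β) = 0` (`mem_orbit_map_iff`).

Galois descent for the cyclic group generated by `θ` (`finrank_descent`) says that the `T`-fixed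
vectors are a `K`-form of the `T^n`-fixed ones. As left and right eigenspaces have the same
dimension, `dim_K ker F_α = dim_L ker (A_F - N_{L/K}(α))` for every `α ≠ 0`
(`finrank_eigenspace_eq`). Eigenspaces for distinct eigenvalues are independent, so their span has
dimension `∑ dim_K ker F_α`, and it is all of `L^d` exactly when this sum equals `d`.
-/

noncomputable section

open Finset

variable {K L : Type*} [Field K] [Field L] [Algebra K L]

/-- The `i`-th truncated norm `N_i(y) = ∏_{j=0}^{i-1} θ^j(y)`. -/
def trunorm (θ : L ≃ₐ[K] L) (i : ℕ) (y : L) : L :=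
  ∏ j ∈ Finset.range i, (θ ^ j) y

/-- The `K`-linear endomorphism `F_α : β ↦ ∑_{i<m} f_i·N_i(α)·θ^i(β)`. -/
def Fmap (θ : L ≃ₐ[K] L) (f : ℕ → L) (m : ℕ) (α : L) : L →ₗ[K] L :=
  ∑ i ∈ Finset.range m, (f i * trunorm θ i α) • (θ ^ i).toLinearMap

/-- The companion matrix `C_F` of `F = f_0 + ⋯ + f_d X^d` (with `f_d ≠ 0`). -/
def compMat (f : ℕ → L) (d : ℕ) : Matrix (Fin d) (Fin d) L :=
  Matrix.of fun i j =>
    if (i : ℕ) = (j : ℕ) + 1 then 1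
    else if (j : ℕ) = d - 1 then -f (i : ℕ) / f d else 0

/-- `A_F := C_F · θ(C_F) · ⋯ · θ^{n-1}(C_F)`, where `θ` acts entrywise. -/
def AF (θ : L ≃ₐ[K] L) (f : ℕ → L) (d n : ℕ) : Matrix (Fin d) (Fin d) L :=
  ((List.range n).map fun t => (compMat f d).map ⇑(θ ^ t)).prod

/-! ### Cyclic Galois groups -/

lemma orderOf_gen [IsGalois K L] [FiniteDimensional K L] (τ : L ≃ₐ[K] L)
    (hgen : ∀ σ : L ≃ₐ[K] L, σ ∈ Subgroup.zpowers τ) : orderOf τ = Module.finrank K L := by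
  rw [orderOf_eq_card_of_forall_mem_zpowers hgen, IsGalois.card_aut_eq_finrank]

lemma trace_eq_sum_pow [IsGalois K L] [FiniteDimensional K L] (τ : L ≃ₐ[K] L)
    (hgen : ∀ σ : L ≃ₐ[K] L, σ ∈ Subgroup.zpowers τ) (x : L) :
    algebraMap K L (Algebra.trace K L x) =
      ∑ k ∈ Finset.range (Module.finrank K L), (τ ^ k) x := by
  classical
  rw [trace_eq_sum_automorphisms, ← IsCyclic.image_range_orderOf hgen, Finset.sum_image,
    orderOf_gen τ hgen]
  intro a ha b hb h
  exact pow_injOn_Iio_orderOf (by simpa using ha) (by simpa using hb) h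

/-- Dedekind's independence of characters for the powers of a generator of the Galois group. -/
lemma eq_zero_of_sum_pow [IsGalois K L] [FiniteDimensional K L] (τ : L ≃ₐ[K] L)
    (hgen : ∀ σ : L ≃ₐ[K] L, σ ∈ Subgroup.zpowers τ) (c : ℕ → L)
    (h : ∀ a : L, ∑ k ∈ Finset.range (Module.finrank K L), (τ ^ k) a * c k = 0) : c 0 = 0 := by
  have li := (linearIndependent_monoidHom L L).comp
    (fun k : Fin (Module.finrank K L) => ((τ ^ (k : ℕ) : L ≃ₐ[K] L) : L →* L)) (by
      intro a b hab
      have : τ ^ (a : ℕ) = τ ^ (b : ℕ) := by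
        ext x
        exact DFunLike.congr_fun hab x
      have ha : (a : ℕ) < orderOf τ := a.2.trans_eq (orderOf_gen τ hgen).symm
      have hb : (b : ℕ) < orderOf τ := b.2.trans_eq (orderOf_gen τ hgen).symm
      exact Fin.ext (pow_injOn_Iio_orderOf ha hb this))
  rw [Fintype.linearIndependent_iff] at li
  refine li (fun k => c k) ?_ ⟨0, Module.finrank_pos⟩
  funext a
  have := h a
  rw [Finset.sum_range] at this
  simpa [mul_comm] using this

/-! ### Galois descent along a semilinear map -/

/-- Galois descent for a cyclic group: if `T` is additive and `τ`-semilinear for a generator `τ`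
of the Galois group of order `n`, then the `T`-fixed vectors form a `K`-form of the space of
`T^n`-fixed vectors. -/
lemma finrank_descent [IsGalois K L] [FiniteDimensional K L] (τ : L ≃ₐ[K] L)
    (hgen : ∀ σ : L ≃ₐ[K] L, σ ∈ Subgroup.zpowers τ)
    {W : Type*} [AddCommGroup W] [Module L W] [Module K W] [IsScalarTower K L W]
    (T : W →+ W) (hT : ∀ (a : L) (v : W), T (a • v) = τ a • T v)
    (E : Submodule L W) (hE : ∀ v, v ∈ E ↔ T^[Module.finrank K L] v = v)
    (V : Submodule K W) (hV : ∀ v, v ∈ V ↔ T v = v) :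
    Module.finrank K V = Module.finrank L E := by
  have hTk : ∀ (k : ℕ) (a : L) (v : W), T^[k] (a • v) = (τ ^ k) a • T^[k] v := by
    intro k
    induction k with
    | zero => intro a v; simp
    | succ k ih =>
      intro a v
      rw [Function.iterate_succ_apply', Function.iterate_succ_apply', ih, hT, pow_succ']
      rfl
  have hTsum : ∀ {ι : Type _} (k : ℕ) (s : Finset ι) (w : ι → W),
      T^[k] (∑ j ∈ s, w j) = ∑ j ∈ s, T^[k] (w j) := by
    intro ι k s w
    induction k with
    | zero => rfl
    | succ k ih => simp only [Function.iterate_succ_apply', ih, map_sum]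
  let b := Module.Basis.ofVectorSpace K V
  have hb : ∀ i (k : ℕ), T^[k] (b i : W) = b i := fun i k =>
    Function.iterate_fixed ((hV _).1 (b i).2) k
  have li : LinearIndependent L (fun i => (b i : W)) := by
    rw [linearIndependent_iff']
    intro s g hg i hi
    -- Multiplying the relation by `a` and summing its images under the powers of `T` gives a
    -- relation over `K` with the coefficients `tr (a * g i)`.
    have key : ∀ a : L, Algebra.trace K L (a * g i) = 0 := by
      intro a
      have h1 : ∀ k : ℕ, ∑ j ∈ s, (τ ^ k) (a * g j) • (b j : W) = 0 := by
        intro k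
        have h2 : ∑ j ∈ s, (a * g j) • (b j : W) = 0 := by
          simp_rw [mul_smul, ← Finset.smul_sum, hg, smul_zero]
        have h3 := congrArg (T^[k]) h2
        rw [iterate_map_zero, hTsum] at h3
        rw [← h3]
        refine Finset.sum_congr rfl fun j _ => ?_
        rw [hTk, hb]
      have h4 : ∑ j ∈ s, Algebra.trace K L (a * g j) • b j = 0 := by
        apply Subtype.ext
        push_cast
        simp_rw [← algebraMap_smul L (Algebra.trace K L _) (_ : W), trace_eq_sum_pow τ hgen,
          Finset.sum_smul]
        rw [Finset.sum_comm]
        exact Finset.sum_eq_zero fun k _ => h1 k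
      exact linearIndependent_iff'.1 b.linearIndependent s _ h4 i hi
    refine (traceForm_nondegenerate K L).2 (g i) fun a => ?_
    simpa [Algebra.traceForm_apply] using key a
  have hspan : Submodule.span L (Set.range fun i => (b i : W)) = E := by
    apply le_antisymm
    · rw [Submodule.span_le]
      rintro _ ⟨i, rfl⟩
      exact (hE _).2 (hb i _)
    · have hVle : ∀ w ∈ V, w ∈ Submodule.span L (Set.range fun i => (b i : W)) := by
        intro w hw
        have h1 : (⟨w, hw⟩ : V) ∈ Submodule.span K (Set.range b) := by
          rw [b.span_eq]; trivial
        have h2 := Submodule.mem_map_of_mem (f := V.subtype) h1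
        rw [Submodule.map_span, ← Set.range_comp] at h2
        exact Submodule.span_le_restrictScalars K L _ h2
      intro v hv
      by_contra hvn
      obtain ⟨l, hl0, hl⟩ := Submodule.exists_le_ker_of_notMem hvn
      apply hl0
      have hvT := (hE v).1 hv
      -- The functional `l` kills the `T`-fixed vectors `∑ T^k (a v)` for all `a`.
      refine eq_zero_of_sum_pow τ hgen (fun k => l (T^[k] v)) fun a => ?_
      have hmem : ∑ k ∈ Finset.range (Module.finrank K L), T^[k] (a • v) ∈ V := by
        rw [hV, map_sum]
        simp_rw [← Function.iterate_succ_apply' T]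
        have h0 : T^[Module.finrank K L] (a • v) = a • v := by
          rw [hTk, hvT, ← orderOf_gen τ hgen, pow_orderOf_eq_one]
          rfl
        have := Finset.sum_range_succ' (fun k => T^[k] (a • v)) (Module.finrank K L)
        rw [Finset.sum_range_succ, h0] at this
        exact (add_right_cancel this).symm
      have := hl (hVle _ hmem)
      rw [LinearMap.mem_ker, map_sum] at this
      simpa [hTk] using this
  rw [← hspan, Module.finrank_eq_nat_card_basis b,
    Module.finrank_eq_nat_card_basis (Module.Basis.span li)]

/-! ### The twisted companion map -/

/-- The `θ⁻¹`-semilinear map `v ↦ θ⁻¹(α⁻¹ · v M)` on row vectors. -/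
def twist (θ : L ≃ₐ[K] L) {d : ℕ} (M : Matrix (Fin d) (Fin d) L) (α : L) :
    (Fin d → L) →+ (Fin d → L) where
  toFun v := fun i => θ⁻¹ (α⁻¹ * Matrix.vecMul v M i)
  map_zero' := by ext i; simp
  map_add' v w := by ext i; simp [Matrix.add_vecMul, mul_add]

lemma twist_apply (θ : L ≃ₐ[K] L) {d : ℕ} (M : Matrix (Fin d) (Fin d) L) (α : L)
    (v : Fin d → L) (i : Fin d) :
    θ (twist θ M α v i) = α⁻¹ * Matrix.vecMul v M i :=
  θ.apply_symm_apply _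

lemma twist_smul (θ : L ≃ₐ[K] L) {d : ℕ} (M : Matrix (Fin d) (Fin d) L) (α : L)
    (a : L) (v : Fin d → L) : twist θ M α (a • v) = θ⁻¹ a • twist θ M α v := by
  ext i
  apply θ.injective
  rw [twist_apply, Pi.smul_apply, smul_eq_mul, map_mul, twist_apply, Matrix.smul_vecMul]
  have : θ (θ⁻¹ a) = a := θ.apply_symm_apply a
  rw [this, Pi.smul_apply, smul_eq_mul]
  ring

lemma iterate_twist (θ : L ≃ₐ[K] L) (f : ℕ → L) (d : ℕ) (α : L) (v : Fin d → L) (k : ℕ)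
    (i : Fin d) :
    (θ ^ k) ((twist θ (compMat f d) α)^[k] v i) =
      (trunorm θ k α)⁻¹ * Matrix.vecMul v (AF θ f d k) i := by
  induction k generalizing i with
  | zero => simp [trunorm, AF]
  | succ k ih =>
    have hA : AF θ f d (k + 1) = AF θ f d k * (compMat f d).map ⇑(θ ^ k) := by
      simp [AF, List.range_succ]
    have hN : trunorm θ (k + 1) α = trunorm θ k α * (θ ^ k) α := by
      simp [trunorm, Finset.prod_range_succ]
    rw [Function.iterate_succ_apply', pow_succ, AlgEquiv.mul_apply, twist_apply, hA, hN,
      ← Matrix.vecMul_vecMul, map_mul, map_inv₀, mul_inv]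
    simp only [Matrix.vecMul, dotProduct, map_sum, map_mul, Matrix.map_apply]
    simp only [Matrix.vecMul, dotProduct] at ih
    simp_rw [ih]
    simp only [Finset.mul_sum]
    exact Finset.sum_congr rfl fun j _ => by rw [← Finset.mul_sum]; ring

/-! ### Fixed vectors and the kernel of `F_α` -/

/-- The map `β ↦ (N_i(α) θ^i(β))_{i<d}`. -/
def orbit (θ : L ≃ₐ[K] L) (d : ℕ) (α : L) : L →ₗ[K] (Fin d → L) :=
  LinearMap.pi fun i => trunorm θ i α • (θ ^ (i : ℕ)).toLinearMap

lemma orbit_apply (θ : L ≃ₐ[K] L) (d : ℕ) (α β : L) (i : Fin d) :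
    orbit θ d α β i = trunorm θ i α * (θ ^ (i : ℕ)) β := rfl

lemma Fmap_apply (θ : L ≃ₐ[K] L) (f : ℕ → L) (m : ℕ) (α β : L) :
    Fmap θ f m α β = ∑ i ∈ Finset.range m, f i * (trunorm θ i α * (θ ^ i) β) := by
  simp [Fmap, mul_assoc]

lemma trunorm_mul_pow_succ (θ : L ≃ₐ[K] L) (α β : L) (i : ℕ) :
    trunorm θ (i + 1) α * (θ ^ (i + 1)) β = α * θ (trunorm θ i α * (θ ^ i) β) := by
  simp only [trunorm, Finset.prod_range_succ', map_mul, map_prod, pow_succ', AlgEquiv.mul_apply,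
    pow_zero, AlgEquiv.one_apply]
  ring

lemma vecMul_compMat_of_lt (f : ℕ → L) (d : ℕ) (v : Fin d → L) (j : ℕ) (hj : j + 1 < d) :
    Matrix.vecMul v (compMat f d) ⟨j, by omega⟩ = v ⟨j + 1, hj⟩ := by
  rw [Matrix.vecMul, dotProduct, Finset.sum_eq_single ⟨j + 1, hj⟩]
  · simp [compMat]
  · intro i _ hi
    have h1 : (i : ℕ) ≠ j + 1 := fun h => hi (Fin.ext h)
    have h2 : j ≠ d - 1 := by omega
    simp [compMat, h1, h2]
  · simp

lemma vecMul_compMat_last (f : ℕ → L) (d : ℕ) (hd : 1 ≤ d) (v : Fin d → L) :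
    Matrix.vecMul v (compMat f d) ⟨d - 1, by omega⟩ = -(∑ i : Fin d, f i * v i) / f d := by
  rw [Matrix.vecMul, dotProduct, neg_div, Finset.sum_div, ← Finset.sum_neg_distrib]
  refine Finset.sum_congr rfl fun i _ => ?_
  have h1 : (i : ℕ) ≠ d - 1 + 1 := by omega
  simp only [compMat, Matrix.of_apply, h1, if_true, if_false]
  ring

/-- The fixed vectors of the twisted companion map are the orbit vectors of the kernel of `F_α`. -/
lemma mem_orbit_map_iff (θ : L ≃ₐ[K] L) (f : ℕ → L) (d : ℕ) (hd : 1 ≤ d) (hfd : f d ≠ 0)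
    (α : L) (hα : α ≠ 0) (v : Fin d → L) :
    v ∈ (LinearMap.ker (Fmap θ f (d + 1) α)).map (orbit θ d α) ↔
      twist θ (compMat f d) α v = v := by
  have hfix : twist θ (compMat f d) α v = v ↔
      ∀ i, Matrix.vecMul v (compMat f d) i = α * θ (v i) := by
    rw [funext_iff]
    refine forall_congr' fun i => ?_
    rw [← θ.injective.eq_iff, twist_apply, inv_mul_eq_iff_eq_mul₀ hα]
  have hlast : ∀ β : L, Fmap θ f (d + 1) α β = 0 ↔
      -(∑ i : Fin d, f i * orbit θ d α β i) / f d = trunorm θ d α * (θ ^ d) β := by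
    intro β
    rw [Fmap_apply, Finset.sum_range_succ, Finset.sum_range, div_eq_iff hfd]
    simp only [orbit_apply]
    constructor
    · intro h; linear_combination -h
    · intro h; linear_combination -h
  have hd1 : d - 1 + 1 = d := by omega
  rw [hfix, Submodule.mem_map]
  constructor
  · rintro ⟨β, hβ, rfl⟩ i
    rw [LinearMap.mem_ker, hlast] at hβ
    rw [orbit_apply, ← trunorm_mul_pow_succ]
    by_cases hi : (i : ℕ) + 1 < d
    · exact vecMul_compMat_of_lt f d _ i hi
    · obtain rfl : (⟨d - 1, Nat.sub_lt hd Nat.one_pos⟩ : Fin d) = i := Fin.ext (by simp only; omega)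
      rw [vecMul_compMat_last f d hd, hβ]
      simp only [hd1]
  · intro h
    have hv : ∀ (j : ℕ) (hj : j < d),
        v ⟨j, hj⟩ = trunorm θ j α * (θ ^ j) (v ⟨0, by omega⟩) := by
      intro j
      induction j with
      | zero => intro hj; simp [trunorm]
      | succ j ih =>
        intro hj
        rw [← vecMul_compMat_of_lt f d v j hj, h, trunorm_mul_pow_succ, ← ih]
    have horb : orbit θ d α (v ⟨0, by omega⟩) = v := by
      funext i
      rw [orbit_apply, ← hv i i.2]
    refine ⟨v ⟨0, by omega⟩, ?_, horb⟩
    rw [LinearMap.mem_ker, hlast, horb, ← vecMul_compMat_last f d hd, h, hv,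
      ← trunorm_mul_pow_succ, hd1]

lemma orbit_injective (θ : L ≃ₐ[K] L) (d : ℕ) (hd : 1 ≤ d) (α : L) :
    Function.Injective (orbit θ d α) := by
  intro x y h
  have := congrFun h ⟨0, by omega⟩
  simpa [orbit_apply, trunorm] using this

/-! ### Dimensions of eigenspaces -/

lemma finrank_ker_transpose {d : ℕ} (M : Matrix (Fin d) (Fin d) L) :
    Module.finrank L (LinearMap.ker M.transpose.mulVecLin) =
      Module.finrank L (LinearMap.ker M.mulVecLin) := by
  have h1 := LinearMap.finrank_range_add_finrank_ker M.mulVecLin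
  have h2 := LinearMap.finrank_range_add_finrank_ker M.transpose.mulVecLin
  have h3 := Matrix.rank_transpose M
  rw [Matrix.rank, Matrix.rank] at h3
  omega

/-- The dimension formula, valid for each nonzero `α` separately. -/
lemma finrank_eigenspace_eq [IsGalois K L] [FiniteDimensional K L] (θ : L ≃ₐ[K] L)
    (hgen : ∀ σ : L ≃ₐ[K] L, σ ∈ Subgroup.zpowers θ)
    (d : ℕ) (hd : 1 ≤ d) (f : ℕ → L) (hfd : f d ≠ 0) (α : L) (hα : α ≠ 0) (n : ℕ)
    (hn : Module.finrank K L = n) :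
    Module.finrank L
        (LinearMap.ker (Matrix.mulVecLin (AF θ f d n - trunorm θ n α • 1))) =
      Module.finrank K (LinearMap.ker (Fmap θ f (d + 1) α)) := by
  subst hn
  have hθn : θ ^ Module.finrank K L = 1 := by
    rw [← orderOf_gen θ hgen, pow_orderOf_eq_one]
  have hN : trunorm θ (Module.finrank K L) α ≠ 0 := by
    rw [trunorm, Finset.prod_ne_zero_iff]
    intro j _
    exact (map_ne_zero (θ ^ j)).2 hα
  rw [← finrank_ker_transpose,
    (Submodule.equivMapOfInjective _ (orbit_injective θ d hd α) _).finrank_eq]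
  symm
  refine finrank_descent θ⁻¹ (by simpa using hgen) (twist θ (compMat f d) α)
    (twist_smul θ _ α) _ (fun v => ?_) _ (mem_orbit_map_iff θ f d hd hfd α hα)
  have hit := iterate_twist θ f d α v (Module.finrank K L)
  rw [hθn] at hit
  rw [LinearMap.mem_ker, Matrix.mulVecLin_apply, Matrix.mulVec_transpose, Matrix.vecMul_sub,
    Matrix.vecMul_smul, Matrix.vecMul_one, sub_eq_zero, funext_iff, funext_iff]
  refine forall_congr' fun i => ?_
  have := hit i
  rw [AlgEquiv.one_apply] at this
  rw [this, inv_mul_eq_iff_eq_mul₀ hN, Pi.smul_apply, smul_eq_mul]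

lemma finrank_sup_of_supIndep {W ι : Type*} [AddCommGroup W] [Module L W] [FiniteDimensional L W]
    (p : ι → Submodule L W) (s : Finset ι) (hs : s.SupIndep p) :
    Module.finrank L ↥(s.sup p) = ∑ i ∈ s, Module.finrank L (p i) := by
  classical
  induction s using Finset.induction_on with
  | empty => simp
  | insert a s ha ih =>
    have hdis : Disjoint (p a) (s.sup p) :=
      hs (Finset.subset_insert a s) (Finset.mem_insert_self a s) ha
    have h1 := Submodule.finrank_sup_add_finrank_inf_eq (p a) (s.sup p)
    rw [hdis.eq_bot, finrank_bot, add_zero] at h1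
    rw [Finset.sup_insert, Finset.sum_insert ha, h1, ih (hs.subset (Finset.subset_insert a s))]

theorem stmt_5 (n : ℕ) [IsGalois K L] [FiniteDimensional K L]
    (hn : Module.finrank K L = n) (θ : L ≃ₐ[K] L)
    (hgen : ∀ σ : L ≃ₐ[K] L, σ ∈ Subgroup.zpowers θ)
    (d : ℕ) (hd : 1 ≤ d) (f : ℕ → L) (hfd : f d ≠ 0)
    (A : Finset L) (hA0 : ∀ α ∈ A, α ≠ 0)
    (hinj : Set.InjOn (trunorm θ n) ↑A) :
    ((∑ α ∈ A, Module.finrank K ↥(LinearMap.ker (Fmap θ f (d + 1) α)) = d)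
        ↔ (⨆ α ∈ A,
            LinearMap.ker (Matrix.mulVecLin (AF θ f d n - trunorm θ n α • 1))) = ⊤) ∧
      ((⨆ α ∈ A,
          LinearMap.ker (Matrix.mulVecLin (AF θ f d n - trunorm θ n α • 1))) = ⊤ →
        ∀ α ∈ A,
          Module.finrank L
              ↥(LinearMap.ker (Matrix.mulVecLin (AF θ f d n - trunorm θ n α • 1)))
            = Module.finrank K ↥(LinearMap.ker (Fmap θ f (d + 1) α))) := by
  have hdim := fun α hα => finrank_eigenspace_eq θ hgen d hd f hfd α (hA0 α hα) n hn
  refine ⟨?_, fun _ => hdim⟩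
  have hind : A.SupIndep fun α =>
      LinearMap.ker (Matrix.mulVecLin (AF θ f d n - trunorm θ n α • 1)) := by
    have h1 := (Module.End.eigenspaces_iSupIndep (AF θ f d n).mulVecLin).comp
      (f := fun α : A => trunorm θ n α) (fun a b h => Subtype.ext (hinj a.2 b.2 h))
    rw [← Finset.supIndep_attach]
    refine iSupIndep.supIndep' (s := A.attach) ?_
    convert h1 using 2 with α
    ext v
    simp [sub_eq_zero]
  have hsum := finrank_sup_of_supIndep _ A hind
  rw [Finset.sum_congr rfl hdim] at hsum
  rw [← hsum, ← Finset.sup_eq_iSup]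
  constructor
  · intro h
    apply Submodule.eq_top_of_finrank_eq
    rw [h, Module.finrank_fin_fun]
  · intro h
    rw [h, finrank_top, Module.finrank_fin_fun]
end
end

section
/- Let ℓ ≥ 1, let α_1,…,α_ℓ ∈ L \ {0} have pairwise distinct norms N_{L/K}(α_j), and let 1 ≤ k ≤ ℓn. For every nonzero tuple (f_0,…,f_{k−1}) ∈ L^k one has Σ_{j=1}^{ℓ} dim_K ker(β ↦ Σ_{i=0}^{k−1} f_i·N_i(α_j)·θ^i(β)) ≤ k − 1; equivalently, the sum-rank weight Σ_{j=1}^{ℓ} (n − dim_K ker F_{α_j}) is at least ℓn − k + 1. Hence the linearized Reed–Solomon code C_k^θ := {(F_{α_1},…,F_{α_ℓ}) : (f_0,…,f_{k−1}) ∈ L^k}, an L-subspace of K-dimension n·k, is a maximum sum-rank distance code. -/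
/-!
The tuple `f` is read as the skew polynomial `P = ∑ f_i X^i` in `L[X; θ]`, and `F_α` is the
operator `P(α·θ)`, because `N_i(α)·θ^i = (α·θ)^i`. The bound on the kernels is proved by induction
on the number of coefficients. If some `F_{α_j}` kills `β ≠ 0`, put `c = α_j·θ(β)/β`; right
division by `X - c` leaves a constant remainder that kills `β`, hence zero, so that
`F_α = G_α ∘ (α·θ - c)` for every `α`, with one coefficient fewer (`skewEval_div`). A nonzero
solution of `α·θ(y) = c·y` forces `N(α) = N(c)` (`trunorm_eq_of_mem_ker`), so `α_j·θ - c` is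
injective except for one `j`, where its kernel is a line over `K`, the fixed field of `θ`
(`finrank_ker_linFactor_le_one`). Hence the factor `X - c` contributes at most `1` to the sum of
the kernel dimensions.

The bound makes `f ↦ (F_{α_1}, …, F_{α_ℓ})` injective, since `k - 1 < ℓ n`; as it is `K`-linear,
its range has dimension `n k`.
-/

noncomputable section

open Finset

variable {K L : Type*} [Field K] [Field L] [Algebra K L]

/-- The map sending `(f_0,…,f_{k-1}) ∈ L^k` to `(F_{α_1},…,F_{α_ℓ})`, where
`F_α(β) = ∑_{i<k} f_i·N_i(α)·θ^i(β)`. -/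
def PhiRS (ℓ : ℕ) (θ : L ≃ₐ[K] L) (α : Fin ℓ → L) (k : ℕ) (f : Fin k → L) :
    Fin ℓ → L →ₗ[K] L :=
  fun j => ∑ i : Fin k, (f i * trunorm θ (i : ℕ) (α j)) • (θ ^ (i : ℕ)).toLinearMap

/-- The operator `β ↦ ∑_{i<k} f_i·N_i(a)·θ^i(β)`, with the coefficients taken from a sequence
indexed by all of `ℕ`, only the first `k` of which matter. -/
def skewEval (θ : L ≃ₐ[K] L) (a : L) (k : ℕ) (f : ℕ → L) : L →ₗ[K] L :=
  ∑ i ∈ Finset.range k, (f i * trunorm θ i a) • (θ ^ i).toLinearMap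

/-- The operator `a·θ - c`, the value at `a` of the skew polynomial `X - c`. -/
def linFactor (θ : L ≃ₐ[K] L) (a c : L) : L →ₗ[K] L :=
  a • θ.toLinearMap - c • LinearMap.id

lemma skewEval_apply (θ : L ≃ₐ[K] L) (a : L) (k : ℕ) (f : ℕ → L) (y : L) :
    skewEval θ a k f y = ∑ i ∈ Finset.range k, f i * trunorm θ i a * (θ ^ i) y := by
  simp [skewEval, LinearMap.sum_apply]

lemma linFactor_apply (θ : L ≃ₐ[K] L) (a c y : L) :
    linFactor θ a c y = a * θ y - c * y := by
  simp [linFactor]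

lemma skewEval_congr (θ : L ≃ₐ[K] L) (a : L) {k : ℕ} {f g : ℕ → L}
    (h : ∀ i < k, f i = g i) : skewEval θ a k f = skewEval θ a k g := by
  unfold skewEval
  exact Finset.sum_congr rfl fun i hi => by rw [h i (Finset.mem_range.1 hi)]

lemma skewEval_succ_apply (θ : L ≃ₐ[K] L) (a : L) (k : ℕ) (f : ℕ → L) (y : L) :
    skewEval θ a (k + 1) f y = skewEval θ a k f y + f k * trunorm θ k a * (θ ^ k) y := by
  rw [skewEval_apply, skewEval_apply, Finset.sum_range_succ]

lemma trunorm_succ (θ : L ≃ₐ[K] L) (i : ℕ) (y : L) :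
    trunorm θ (i + 1) y = trunorm θ i y * (θ ^ i) y := by
  rw [trunorm, Finset.prod_range_succ, trunorm]

lemma trunorm_succ' (θ : L ≃ₐ[K] L) (i : ℕ) (y : L) :
    trunorm θ (i + 1) y = trunorm θ i (θ y) * y := by
  simp [trunorm, Finset.prod_range_succ']

lemma trunorm_mul (θ : L ≃ₐ[K] L) (i : ℕ) (x y : L) :
    trunorm θ i (x * y) = trunorm θ i x * trunorm θ i y := by
  simp [trunorm, Finset.prod_mul_distrib]

lemma trunorm_ne_zero (θ : L ≃ₐ[K] L) (i : ℕ) {y : L} (hy : y ≠ 0) : trunorm θ i y ≠ 0 := by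
  rw [trunorm, Finset.prod_ne_zero_iff]
  exact fun j _ => (map_ne_zero_iff _ (θ ^ j).injective).2 hy

/-- Right division by `X - c`: the quotient has one coefficient fewer and the same leading
coefficient, and the remainder is a constant; both are independent of the point `a` at which the
skew polynomials are evaluated. -/
lemma skewEval_div (θ : L ≃ₐ[K] L) (c : L) (k : ℕ) :
    ∀ f : ℕ → L, ∃ (g : ℕ → L) (r : L), g k = f (k + 1) ∧ ∀ a y : L,
      skewEval θ a (k + 2) f y = skewEval θ a (k + 1) g (linFactor θ a c y) + r * y := by
  induction k with
  | zero =>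
    intro f
    refine ⟨fun _ => f 1, f 0 + f 1 * c, rfl, fun a y => ?_⟩
    simp only [skewEval_apply, linFactor_apply, Finset.sum_range_succ, trunorm]
    simp
    ring
  | succ k ih =>
    intro f
    -- `f_{k+2} X^{k+2} = f_{k+2} X^{k+1} (X - c) + f_{k+2} θ^{k+1}(c) X^{k+1}`
    obtain ⟨g, r, -, hgr⟩ :=
      ih (Function.update f (k + 1) (f (k + 1) + f (k + 2) * (θ ^ (k + 1)) c))
    refine ⟨Function.update g (k + 1) (f (k + 2)), r, by simp, fun a y => ?_⟩
    have h := hgr a y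
    rw [skewEval_succ_apply, skewEval_congr (g := f)] at h
    · rw [skewEval_succ_apply θ a (k + 2), skewEval_succ_apply θ a (k + 1) f,
        skewEval_succ_apply θ a (k + 1), skewEval_congr (f := Function.update g _ _) (g := g)]
      · have h1 : (θ ^ (k + 2)) y = (θ ^ (k + 1)) (θ y) := by
          rw [pow_succ θ (k + 1), AlgEquiv.mul_apply]
        rw [trunorm_succ θ (k + 1), h1, linFactor_apply θ a c y, map_sub (θ ^ (k + 1)),
          map_mul (θ ^ (k + 1)), map_mul (θ ^ (k + 1))]
        rw [linFactor_apply θ a c y] at h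
        simp only [Function.update_self] at h ⊢
        linear_combination h
      · intro i hi
        rw [Function.update_of_ne (by omega)]
    · intro i hi
      rw [Function.update_of_ne (by omega)]

lemma finrank_ker_comp_le [FiniteDimensional K L] (A B : L →ₗ[K] L) :
    Module.finrank K (LinearMap.ker (A ∘ₗ B)) ≤
      Module.finrank K (LinearMap.ker A) + Module.finrank K (LinearMap.ker B) := by
  rw [← LinearMap.finrank_range_add_finrank_ker (B.domRestrict (LinearMap.ker (A ∘ₗ B)))]
  refine add_le_add (Submodule.finrank_mono ?_) ?_
  · rintro _ ⟨⟨x, hx⟩, rfl⟩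
    simpa using hx
  · rw [← Submodule.finrank_map_subtype_eq]
    refine Submodule.finrank_mono ?_
    rintro _ ⟨⟨x, hx⟩, hxB, rfl⟩
    simpa using hxB

/-- If `a·θ - c` is not injective, then `a` and `c` have the same norm. -/
lemma trunorm_eq_of_mem_ker (θ : L ≃ₐ[K] L) {n : ℕ} (hθ : θ ^ n = 1) {a c y : L} (hy : y ≠ 0)
    (h : a * θ y = c * y) : trunorm θ n a = trunorm θ n c := by
  -- the norm is invariant under `θ`
  have h1 : trunorm θ n (θ y) = trunorm θ n y := by
    have := (trunorm_succ' θ n y).symm.trans (trunorm_succ θ n y)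
    rw [hθ] at this
    exact mul_right_cancel₀ hy this
  have h2 := congrArg (trunorm θ n) h
  rw [trunorm_mul, trunorm_mul, h1] at h2
  exact mul_right_cancel₀ (trunorm_ne_zero θ n hy) h2

lemma finrank_ker_linFactor_le_one [IsGalois K L] [FiniteDimensional K L] (θ : L ≃ₐ[K] L)
    (hgen : ∀ σ : L ≃ₐ[K] L, σ ∈ Subgroup.zpowers θ) {a : L} (ha : a ≠ 0) (c : L) :
    Module.finrank K (LinearMap.ker (linFactor θ a c)) ≤ 1 := by
  by_cases hb : LinearMap.ker (linFactor θ a c) = ⊥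
  · rw [hb]
    simp
  obtain ⟨b, hbk, hb0⟩ := Submodule.exists_mem_ne_zero_of_ne_bot hb
  refine finrank_le_one (⟨b, hbk⟩ : LinearMap.ker (linFactor θ a c)) ?_
  rintro ⟨y, hy⟩
  rw [LinearMap.mem_ker, linFactor_apply, sub_eq_zero] at hy hbk
  have hθb : θ b ≠ 0 := by simpa using hb0
  -- the quotient of two solutions is fixed by `θ`, hence lies in `K`
  have hfix : θ (y / b) = y / b := by
    rw [map_div₀, div_eq_div_iff hθb hb0]
    refine mul_left_cancel₀ ha ?_
    linear_combination b * hy - y * hbk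
  have hstab : ∀ σ : L ≃ₐ[K] L, σ (y / b) = y / b := by
    intro σ
    have hle : Subgroup.zpowers θ ≤ MulAction.stabilizer (L ≃ₐ[K] L) (y / b) := by
      rw [Subgroup.zpowers_le]
      exact hfix
    exact hle (hgen σ)
  obtain ⟨t, ht⟩ := IntermediateField.mem_bot.1 ((IsGalois.mem_bot_iff_fixed (y / b)).2 hstab)
  refine ⟨t, Subtype.ext ?_⟩
  change t • b = y
  rw [Algebra.smul_def, ht, div_mul_cancel₀ _ hb0]

/-- A nonzero skew polynomial with at most `k` coefficients has, counted by kernel dimension, fewer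
than `k` roots over points with pairwise distinct norms. -/
lemma sum_finrank_ker_skewEval_lt [IsGalois K L] [FiniteDimensional K L] {n ℓ : ℕ}
    (θ : L ≃ₐ[K] L) (hθ : θ ^ n = 1) (hgen : ∀ σ : L ≃ₐ[K] L, σ ∈ Subgroup.zpowers θ)
    (α : Fin ℓ → L) (hα0 : ∀ j, α j ≠ 0)
    (hdist : Function.Injective fun j => trunorm θ n (α j)) (k : ℕ) :
    ∀ f : ℕ → L, (∃ i < k, f i ≠ 0) →
      ∑ j : Fin ℓ, Module.finrank K (LinearMap.ker (skewEval θ (α j) k f)) < k := by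
  induction k with
  | zero => simp
  | succ k ih =>
    rintro f ⟨i, hi, hfi⟩
    by_cases hinj : ∀ j, LinearMap.ker (skewEval θ (α j) (k + 1) f) = ⊥
    · rw [Finset.sum_eq_zero fun j _ => by rw [hinj j, finrank_bot]]
      exact Nat.succ_pos k
    push Not at hinj
    obtain ⟨j₀, hj₀⟩ := hinj
    by_cases hfk : f k = 0
    · have hik : i < k := by
        rcases Nat.lt_succ_iff_lt_or_eq.1 hi with h | rfl
        · exact h
        · exact absurd hfk hfi
      have heq : ∀ j, skewEval θ (α j) (k + 1) f = skewEval θ (α j) k f := by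
        intro j
        ext y
        simp [skewEval_succ_apply, hfk]
      rw [Finset.sum_congr rfl fun j _ => by rw [heq j]]
      exact (ih f ⟨i, hik, hfi⟩).trans (Nat.lt_succ_self k)
    obtain ⟨b, hbk, hb0⟩ := Submodule.exists_mem_ne_zero_of_ne_bot hj₀
    rw [LinearMap.mem_ker] at hbk
    cases k with
    | zero =>
      rw [skewEval_apply] at hbk
      simp [trunorm, hfk, hb0] at hbk
    | succ k =>
      set c : L := α j₀ * θ b / b with hc
      have hcb : α j₀ * θ b = c * b := by rw [hc, div_mul_cancel₀ _ hb0]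
      obtain ⟨g, r, hg, hgr⟩ := skewEval_div θ c k f
      have hr : r = 0 := by
        have h := hgr (α j₀) b
        rw [hbk, linFactor_apply, hcb, sub_self, map_zero, zero_add] at h
        exact (mul_eq_zero.1 h.symm).resolve_right hb0
      have hcomp : ∀ j, skewEval θ (α j) (k + 2) f =
          skewEval θ (α j) (k + 1) g ∘ₗ linFactor θ (α j) c := by
        intro j
        ext y
        simp [hgr, hr]
      have hlin : ∀ j, Module.finrank K (LinearMap.ker (linFactor θ (α j) c)) ≤
          if j = j₀ then 1 else 0 := by
        intro j
        split_ifs with hj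
        · exact finrank_ker_linFactor_le_one θ hgen (hα0 j) c
        · have hbot : LinearMap.ker (linFactor θ (α j) c) = ⊥ := by
            rw [LinearMap.ker_eq_bot']
            intro y hy
            rw [linFactor_apply, sub_eq_zero] at hy
            by_contra hy0
            exact hj (hdist ((trunorm_eq_of_mem_ker θ hθ hy0 hy).trans
              (trunorm_eq_of_mem_ker θ hθ hb0 hcb).symm))
          rw [hbot]
          simp
      have hih := ih g ⟨k, Nat.lt_succ_self k, by rw [hg]; exact hfk⟩
      calc ∑ j : Fin ℓ, Module.finrank K (LinearMap.ker (skewEval θ (α j) (k + 2) f))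
          ≤ ∑ j : Fin ℓ, (Module.finrank K (LinearMap.ker (skewEval θ (α j) (k + 1) g)) +
              if j = j₀ then 1 else 0) := by
            refine Finset.sum_le_sum fun j _ => ?_
            rw [hcomp j]
            exact (finrank_ker_comp_le _ _).trans (Nat.add_le_add_left (hlin j) _)
        _ = ∑ j : Fin ℓ, Module.finrank K (LinearMap.ker (skewEval θ (α j) (k + 1) g)) + 1 := by
            simp [Finset.sum_add_distrib]
        _ < k + 2 := by omega

/-- `PhiRS` bundled as a `K`-linear map. -/
def PhiRSLin (ℓ : ℕ) (θ : L ≃ₐ[K] L) (α : Fin ℓ → L) (k : ℕ) :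
    (Fin k → L) →ₗ[K] (Fin ℓ → L →ₗ[K] L) where
  toFun := PhiRS ℓ θ α k
  map_add' f g := by
    ext j y
    simp [PhiRS, LinearMap.sum_apply, add_mul, Finset.sum_add_distrib]
  map_smul' t f := by
    ext j y
    simp [PhiRS, LinearMap.sum_apply, Finset.smul_sum]

lemma PhiRS_eq_skewEval (ℓ : ℕ) (θ : L ≃ₐ[K] L) (α : Fin ℓ → L) (k : ℕ) (f : Fin k → L)
    (j : Fin ℓ) :
    PhiRS ℓ θ α k f j = skewEval θ (α j) k (fun i => if h : i < k then f ⟨i, h⟩ else 0) := by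
  rw [PhiRS, skewEval, Finset.sum_range]
  simp

theorem stmt_9 (n ℓ : ℕ) [IsGalois K L] [FiniteDimensional K L]
    (hn : Module.finrank K L = n) (θ : L ≃ₐ[K] L)
    (hgen : ∀ σ : L ≃ₐ[K] L, σ ∈ Subgroup.zpowers θ)
    (hl : 1 ≤ ℓ) (α : Fin ℓ → L) (hα0 : ∀ j, α j ≠ 0)
    (hdist : Function.Injective fun j => trunorm θ n (α j))
    (k : ℕ) (hk1 : 1 ≤ k) (hk : k ≤ ℓ * n) :
    (∀ f : Fin k → L, f ≠ 0 →
        ∑ j : Fin ℓ, Module.finrank K ↥(LinearMap.ker (PhiRS ℓ θ α k f j)) ≤ k - 1 ∧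
        ℓ * n - k + 1
          ≤ ∑ j : Fin ℓ, (n - Module.finrank K ↥(LinearMap.ker (PhiRS ℓ θ α k f j)))) ∧
      Module.finrank K ↥(Submodule.span K (Set.range (PhiRS ℓ θ α k))) = n * k := by
  have hθ : θ ^ n = 1 := by
    rw [← hn, ← IsGalois.card_aut_eq_finrank K L]
    exact pow_card_eq_one'
  have hker : ∀ f : Fin k → L, f ≠ 0 →
      ∑ j : Fin ℓ, Module.finrank K ↥(LinearMap.ker (PhiRS ℓ θ α k f j)) < k := by
    intro f hf
    obtain ⟨i, hi⟩ := Function.ne_iff.1 hf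
    rw [Finset.sum_congr rfl fun j _ => by rw [PhiRS_eq_skewEval ℓ θ α k f j]]
    exact sum_finrank_ker_skewEval_lt θ hθ hgen α hα0 hdist k _
      ⟨i, i.2, by simpa using hi⟩
  refine ⟨fun f hf => ⟨Nat.le_sub_one_of_lt (hker f hf), ?_⟩, ?_⟩
  · have hsum : ∑ j : Fin ℓ, (n - Module.finrank K ↥(LinearMap.ker (PhiRS ℓ θ α k f j))) +
        ∑ j : Fin ℓ, Module.finrank K ↥(LinearMap.ker (PhiRS ℓ θ α k f j)) = ℓ * n := by
      rw [← Finset.sum_add_distrib]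
      have hle : ∀ j, n - Module.finrank K ↥(LinearMap.ker (PhiRS ℓ θ α k f j)) +
          Module.finrank K ↥(LinearMap.ker (PhiRS ℓ θ α k f j)) = n := fun j =>
        Nat.sub_add_cancel (hn ▸ Submodule.finrank_le _)
      simp [hle]
    have := hker f hf
    omega
  · have hinj : Function.Injective (PhiRSLin ℓ θ α k) := by
      rw [← LinearMap.ker_eq_bot, LinearMap.ker_eq_bot']
      intro f hf
      by_contra hf0
      have h := hker f hf0
      have hz : PhiRS ℓ θ α k f = 0 := hf
      rw [hz, Finset.sum_congr rfl fun j _ => by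
        rw [Pi.zero_apply, LinearMap.ker_zero, finrank_top, hn]] at h
      simp only [Finset.sum_const, Finset.card_univ, Fintype.card_fin, smul_eq_mul] at h
      omega
    have hspan : Submodule.span K (Set.range (PhiRS ℓ θ α k)) =
        LinearMap.range (PhiRSLin ℓ θ α k) := by
      have hr : Set.range (PhiRS ℓ θ α k) = (LinearMap.range (PhiRSLin ℓ θ α k) : Set _) := rfl
      rw [hr, Submodule.span_eq]
    rw [hspan, LinearMap.finrank_range_of_inj hinj, Module.finrank_pi_fintype]
    simp [hn, mul_comm]
end
end
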